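/- arXiv:math/9403216 — 2 statements merged into one kernel-verified Lean document; each statement's English description precedes it below -/
import Mathlib

section
/- Let 0<q<1. For every z∈ℂ one has Σ_{k=0}^∞ q^{k(k-1)/2} z^k/(q;q)_k = (-z;q)_∞ (evaluation of the q-exponential series E_q). -/
noncomputable section

/-- The finite q-shifted factorial `(a;q)_k`. -/
def qp (q a : ℂ) (k : ℕ) : ℂ := ∏ j ∈ Finset.range k, (1 - a * q ^ j)

/-- The infinite q-shifted factorial `(a;q)_∞`. -/
def qpi (q a : ℂ) : ℂ := ∏' j : ℕ, (1 - a * q ^ j)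

/-!
The series `E(z)` is entire and satisfies `E(z) = (1 + z) E(qz)`. A function `f` continuous at `0`
with `f(z) = (1 + z) f(qz)` is determined by `f(0)`: iterating gives `f(z) = (-z;q)_n f(q^n z)`, and
letting `n → ∞` gives `f(z) = (-z;q)_∞ f(0)`. Here `E(0) = 1`.
-/

open Filter Topology

section QExponential

variable {q : ℂ}

lemma qp_zero (q a : ℂ) : qp q a 0 = 1 :=
  Finset.prod_range_zero _

lemma qp_succ (q a : ℂ) (k : ℕ) : qp q a (k + 1) = qp q a k * (1 - a * q ^ k) :=
  Finset.prod_range_succ _ _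

lemma multipliable_one_sub_mul_pow (hq : ‖q‖ < 1) (a : ℂ) :
    Multipliable fun j : ℕ => 1 - a * q ^ j := by
  have hsum : Summable fun j : ℕ => -(a * q ^ j) :=
    ((summable_geometric_of_norm_lt_one hq).mul_left a).neg
  simpa only [sub_eq_add_neg] using Complex.multipliable_one_add_of_summable hsum

lemma tendsto_qp_atTop (hq : ‖q‖ < 1) (a : ℂ) : Tendsto (qp q a) atTop (𝓝 (qpi q a)) :=
  (multipliable_one_sub_mul_pow hq a).tendsto_prod_tprod_nat

section FunctionalEquation

variable {f : ℂ → ℂ}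

lemma eq_qp_mul_of_eq_one_add_mul (hf : ∀ z, f z = (1 + z) * f (q * z)) (z : ℂ) (n : ℕ) :
    f z = qp q (-z) n * f (q ^ n * z) := by
  induction n with
  | zero => simp only [qp_zero, pow_zero, one_mul]
  | succ n ih =>
    rw [ih, hf (q ^ n * z), qp_succ, ← mul_assoc q, ← pow_succ']
    ring

lemma eq_qpi_mul_of_eq_one_add_mul (hq : ‖q‖ < 1) (hf₀ : ContinuousAt f 0)
    (hf : ∀ z, f z = (1 + z) * f (q * z)) (z : ℂ) : f z = qpi q (-z) * f 0 := by
  have harg : Tendsto (fun n : ℕ => q ^ n * z) atTop (𝓝 0) := by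
    simpa only [zero_mul] using (tendsto_pow_atTop_nhds_zero_of_norm_lt_one hq).mul_const z
  have hlim : Tendsto (fun n => qp q (-z) n * f (q ^ n * z)) atTop (𝓝 (qpi q (-z) * f 0)) :=
    (tendsto_qp_atTop hq (-z)).mul (hf₀.tendsto.comp harg)
  simp only [← eq_qp_mul_of_eq_one_add_mul hf z] at hlim
  exact tendsto_nhds_unique tendsto_const_nhds hlim

end FunctionalEquation

/-- The `k`-th term `q^(k(k-1)/2) z^k / (q;q)_k` of the q-exponential series `E_q(z)`. -/
def qExpTerm (q z : ℂ) (k : ℕ) : ℂ := q ^ (k * (k - 1) / 2) * z ^ k / qp q q k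

/-- The q-exponential function `E_q(z)`, the sum of its series. It is a `tsum`, hence meaningful
only where the series converges, in particular for `‖q‖ < 1`. -/
def qExp (q z : ℂ) : ℂ := ∑' k, qExpTerm q z k

lemma qExpTerm_zero (q z : ℂ) : qExpTerm q z 0 = 1 := by
  simp [qExpTerm, qp_zero]

lemma qExpTerm_succ (q z : ℂ) (k : ℕ) :
    qExpTerm q z (k + 1) = z * q ^ k / (1 - q ^ (k + 1)) * qExpTerm q z k := by
  have hexp : (k + 1) * (k + 1 - 1) / 2 = k * (k - 1) / 2 + k := Nat.triangle_succ k
  rw [qExpTerm, qExpTerm, hexp, qp_succ, ← pow_succ', div_mul_div_comm]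
  ring

lemma qExpTerm_mul (q w z : ℂ) (k : ℕ) : qExpTerm q (w * z) k = w ^ k * qExpTerm q z k := by
  rw [qExpTerm, qExpTerm, mul_pow]
  ring

lemma norm_qExpTerm_le_of_norm_le (q : ℂ) {w z : ℂ} (h : ‖w‖ ≤ ‖z‖) (k : ℕ) :
    ‖qExpTerm q w k‖ ≤ ‖qExpTerm q z k‖ := by
  simp only [qExpTerm, norm_div, norm_mul, norm_pow]
  gcongr

lemma one_sub_pow_succ_ne_zero (hq : ‖q‖ < 1) (k : ℕ) : 1 - q ^ (k + 1) ≠ 0 := by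
  have hpow : ‖q ^ (k + 1)‖ < 1 := by
    simpa only [norm_pow] using pow_lt_one₀ (norm_nonneg q) hq k.succ_ne_zero
  exact (isUnit_one_sub_of_norm_lt_one hpow).ne_zero

lemma qExpTerm_succ_sub_qExpTerm_mul_succ (hq : ‖q‖ < 1) (z : ℂ) (k : ℕ) :
    qExpTerm q z (k + 1) - qExpTerm q (q * z) (k + 1) = z * qExpTerm q (q * z) k := by
  have hne := one_sub_pow_succ_ne_zero hq k
  rw [qExpTerm_mul, qExpTerm_mul, qExpTerm_succ]
  field_simp

lemma summable_qExpTerm (hq : ‖q‖ < 1) (z : ℂ) : Summable (qExpTerm q z) := by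
  have hpow : Tendsto (fun k : ℕ => q ^ k) atTop (𝓝 0) :=
    tendsto_pow_atTop_nhds_zero_of_norm_lt_one hq
  have hratio : Tendsto (fun k : ℕ => ‖z * q ^ k / (1 - q ^ (k + 1))‖) atTop (𝓝 0) := by
    simpa using ((hpow.const_mul z).div ((hpow.comp (tendsto_add_atTop_nat 1)).const_sub 1)
      (by simp)).norm
  refine summable_of_ratio_norm_eventually_le (r := 1 / 2) (by norm_num) ?_
  filter_upwards [hratio.eventually_le_const (by norm_num : (0 : ℝ) < 1 / 2)] with k hk
  rw [qExpTerm_succ, norm_mul]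
  gcongr

lemma qExp_zero (q : ℂ) : qExp q 0 = 1 := by
  rw [qExp, tsum_eq_single 0 fun k hk => by simp [qExpTerm, hk], qExpTerm_zero]

lemma continuous_qExp (hq : ‖q‖ < 1) : Continuous (qExp q) := by
  refine continuous_iff_continuousAt.2 fun w => ?_
  obtain ⟨R, hwR⟩ := NormedField.exists_lt_norm ℂ ‖w‖
  have hterm (k : ℕ) : ContinuousOn (fun v => qExpTerm q v k) (Metric.ball 0 ‖R‖) := by
    unfold qExpTerm
    fun_prop
  have hbound (k : ℕ) (v : ℂ) (hv : v ∈ Metric.ball 0 ‖R‖) :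
      ‖qExpTerm q v k‖ ≤ ‖qExpTerm q R k‖ :=
    norm_qExpTerm_le_of_norm_le q (mem_ball_zero_iff.1 hv).le k
  exact (continuousOn_tsum hterm (summable_qExpTerm hq R).norm hbound).continuousAt
    (Metric.isOpen_ball.mem_nhds (mem_ball_zero_iff.2 hwR))

lemma qExp_eq_one_add_mul (hq : ‖q‖ < 1) (z : ℂ) : qExp q z = (1 + z) * qExp q (q * z) := by
  have hz := summable_qExpTerm hq z
  have hqz := summable_qExpTerm hq (q * z)
  have hdiff : qExp q z - qExp q (q * z) = z * qExp q (q * z) :=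
    calc qExp q z - qExp q (q * z)
        = ∑' k, (qExpTerm q z k - qExpTerm q (q * z) k) := (hz.tsum_sub hqz).symm
      _ = ∑' k, (qExpTerm q z (k + 1) - qExpTerm q (q * z) (k + 1)) := by
        rw [(hz.sub hqz).tsum_eq_zero_add, qExpTerm_zero, qExpTerm_zero, sub_self, zero_add]
      _ = z * qExp q (q * z) := by
        simp only [qExpTerm_succ_sub_qExpTerm_mul_succ hq, tsum_mul_left, qExp]
  linear_combination hdiff

theorem qExp_eq_qpi (hq : ‖q‖ < 1) (z : ℂ) : qExp q z = qpi q (-z) := by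
  simpa only [qExp_zero, mul_one] using
    eq_qpi_mul_of_eq_one_add_mul hq (continuous_qExp hq).continuousAt (qExp_eq_one_add_mul hq) z

end QExponential

theorem stmt2_general (q : ℂ) (hq : ‖q‖ < 1) (z : ℂ) :
    HasSum (fun k : ℕ => q ^ (k * (k - 1) / 2) * z ^ k / qp q q k) (qpi q (-z)) :=
  qExp_eq_qpi hq z ▸ (summable_qExpTerm hq z).hasSum

/-- Evaluation of the q-exponential series `E_q`: for `0<q<1` and all `z ∈ ℂ`,
`Σ_{k≥0} q^{k(k-1)/2} z^k/(q;q)_k = (-z;q)_∞`. -/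
theorem stmt2 (q : ℝ) (hq0 : 0 < q) (hq1 : q < 1) (z : ℂ) :
    HasSum (fun k : ℕ => (q : ℂ) ^ (k * (k - 1) / 2) * z ^ k / qp (q : ℂ) (q : ℂ) k)
      (qpi (q : ℂ) (-z)) :=
  stmt2_general q (by rwa [Complex.norm_of_nonneg hq0.le]) z
end
end

section
/- (Three-term transformation for ₂φ₁; Mimachi's relation) Let 0<q<1 and a,b,c,z∈ℂ with a,b≠0, |qc/(ab)|<|z|<1, a/b ∉ {q^k : k∈ℤ}, and such that the sets {q^n : n∈ℤ_{≥0}} and {a^{-1}q^{-n}, b^{-1}q^{-n} : n∈ℤ_{≥0}} are disjoint, and the lower parameters c, qa/b, qb/a avoid {1,q^{-1},q^{-2},…}. Then (z, q z^{-1};q)_∞ · ₂φ₁(a,b;c;q,z) = (az, q a^{-1}z^{-1};q)_∞ · ((c/a, b;q)_∞/((c, b/a;q)_∞)) · ₂φ₁(a, qa/c; qa/b; q, qc/(abz)) + (bz, q b^{-1}z^{-1};q)_∞ · ((c/b, a;q)_∞/((c, a/b;q)_∞)) · ₂φ₁(b, qb/c; qb/a; q, qc/(abz)). -/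
/-!
The function `(cx, qx/z, z/x;q)_∞ / ((ax, bx, 1/x;q)_∞ x)` has simple poles at `q^k`, `1/(a q^k)`
and `1/(b q^k)`; the residues in the three families are the terms of the three series `₂φ₁`, and the
transformation says that all residues add up to zero.

Truncating every infinite product to `n` factors makes the function rational, and the vanishing of
the sum of its residues becomes Lagrange interpolation of a polynomial, evaluated at `0`. The pole
at `0` and the point at infinity now contribute `z^n` and `(qc/(abz))^n`, which tend to zero, and
the other residues are terms of the series times bounded convergent factors, so Tannery's theorem
allows `n → ∞`.
-/

noncomputable section

/-- The basic hypergeometric series `₂φ₁(a,b;c;q,z)`. -/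
def phi21 (q a b c z : ℂ) : ℂ :=
  ∑' k : ℕ, qp q a k * qp q b k / (qp q c k * qp q q k) * z ^ k

open Filter Topology Finset Polynomial

/-! ### Partial fractions -/

section Interpolation

variable {R F ι : Type*} [CommRing R] [Field F]

lemma natDegree_prod_linear_le (s : Finset ι) (β γ : ι → R) :
    (∏ j ∈ s, (C (γ j) - C (β j) * X)).natDegree ≤ #s := by
  refine (natDegree_prod_le _ _).trans ((sum_le_card_nsmul _ _ 1 fun j _ => ?_).trans (by simp))
  compute_degree

lemma coeff_card_prod_linear (s : Finset ι) (β γ : ι → R) :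
    (∏ j ∈ s, (C (γ j) - C (β j) * X)).coeff #s = ∏ j ∈ s, -β j := by
  have h := coeff_prod_of_natDegree_le (s := s) (fun j => C (γ j) - C (β j) * X) 1
    fun j _ => by compute_degree
  simpa only [mul_one, coeff_sub, coeff_C_succ, coeff_C_mul, coeff_X_one, zero_sub] using h

variable [DecidableEq ι]

lemma eval_zero_eq_sum_div_prod_erase {s : Finset ι} {x : ι → F} (hx : Set.InjOn x s)
    (hx0 : ∀ i ∈ s, x i ≠ 0) {P : F[X]} (hP : P.degree < #s) :
    P.eval 0 = ∑ i ∈ s, P.eval (x i) / ∏ j ∈ s.erase i, (1 - x i / x j) := by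
  conv_lhs => rw [Lagrange.eq_interpolate hx hP, Lagrange.interpolate_apply, eval_finsetSum]
  refine sum_congr rfl fun i _ => ?_
  rw [eval_mul, eval_C, Lagrange.basis, eval_prod, div_eq_mul_inv, ← prod_inv_distrib]
  congr 1
  refine prod_congr rfl fun j hj => ?_
  rw [Lagrange.basisDivisor, eval_mul, eval_C, eval_sub, eval_X, eval_C,
    one_sub_div (hx0 j (mem_of_mem_erase hj)), inv_div, ← neg_sub (x i), div_neg]
  ring

-- The interpolated polynomial is the numerator minus the multiple of `∏ (1 - X / x j)`, which
-- vanishes at all nodes, that cancels its coefficient of degree `#s`.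
lemma sum_prod_div_prod_erase {s : Finset ι} {x : ι → F} (hx : Set.InjOn x s)
    (hx0 : ∀ i ∈ s, x i ≠ 0) (β γ : ι → F) :
    ∑ i ∈ s, (∏ j ∈ s, (γ j - β j * x i)) / ∏ j ∈ s.erase i, (1 - x i / x j) =
      ∏ j ∈ s, γ j - ∏ j ∈ s, β j * x j := by
  set P : F[X] := ∏ j ∈ s, (C (γ j) - C (β j) * X) -
    C (∏ j ∈ s, β j * x j) * ∏ j ∈ s, (C 1 - C (x j)⁻¹ * X) with hP
  have hP_natDegree : P.natDegree ≤ #s :=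
    (natDegree_sub_le_of_le (natDegree_prod_linear_le s β γ)
      ((natDegree_C_mul_le _ _).trans (natDegree_prod_linear_le s _ _))).trans (max_self _).le
  have hP_coeff : P.coeff #s = 0 := by
    rw [hP, coeff_sub, coeff_C_mul, coeff_card_prod_linear, coeff_card_prod_linear,
      ← prod_mul_distrib, sub_eq_zero]
    exact prod_congr rfl fun j hj => by field_simp [hx0 j hj]
  have hP_degree : P.degree < #s := (degree_lt_iff_coeff_zero _ _).2 fun m hm => by
    obtain rfl | hm := hm.eq_or_lt
    exacts [hP_coeff, coeff_eq_zero_of_natDegree_lt (hP_natDegree.trans_lt hm)]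
  have hP_eval : ∀ i ∈ s, P.eval (x i) = ∏ j ∈ s, (γ j - β j * x i) := fun i hi => by
    have : ∏ j ∈ s, (1 - (x j)⁻¹ * x i) = 0 := prod_eq_zero hi (by simp [hx0 i hi])
    simp [hP, eval_prod, this]
  have hP_zero : P.eval 0 = ∏ j ∈ s, γ j - ∏ j ∈ s, β j * x j := by simp [hP, eval_prod]
  rw [← hP_zero, eval_zero_eq_sum_div_prod_erase hx hx0 hP_degree]
  exact sum_congr rfl fun i hi => by rw [hP_eval i hi]

end Interpolation

section Products

variable {M : Type*} [CommMonoid M]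

lemma prod_range_erase (f : ℕ → M) {n k : ℕ} (hk : k < n) :
    ∏ j ∈ (range n).erase k, f j =
      (∏ j ∈ range k, f j) * ∏ j ∈ range (n - 1 - k), f (k + 1 + j) := by
  have hn : n = k + 1 + (n - 1 - k) := by omega
  calc ∏ j ∈ (range n).erase k, f j = ∏ j ∈ (range n).erase k, Function.update f k 1 j :=
        prod_congr rfl fun j hj => (Function.update_of_ne (ne_of_mem_erase hj) _ _).symm
    _ = ∏ j ∈ range n, Function.update f k 1 j := prod_erase _ (Function.update_self ..)
    _ = _ := by
      rw [hn, prod_range_add, prod_range_succ, Function.update_self, mul_one, ← hn]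
      congr 1 <;> refine prod_congr rfl fun j hj => Function.update_of_ne ?_ _ _
      · exact (mem_range.mp hj).ne
      · omega

variable {ι κ : Type*} [DecidableEq ι] [DecidableEq κ]

lemma prod_erase_inl_disjSum (s : Finset ι) (t : Finset κ) (i : ι) (f : ι ⊕ κ → M) :
    ∏ j ∈ (s.disjSum t).erase (.inl i), f j =
      (∏ j ∈ s.erase i, f (.inl j)) * ∏ j ∈ t, f (.inr j) := by
  rw [← prod_disjSum]
  congr 1
  ext (_ | _) <;> simp

lemma prod_erase_inr_disjSum (s : Finset ι) (t : Finset κ) (i : κ) (f : ι ⊕ κ → M) :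
    ∏ j ∈ (s.disjSum t).erase (.inr i), f j =
      (∏ j ∈ s, f (.inl j)) * ∏ j ∈ t.erase i, f (.inr j) := by
  rw [← prod_disjSum]
  congr 1
  ext (_ | _) <;> simp

end Products

/-! ### Powers of the base -/

section Powers

variable {K : Type*} [Field K] {q a b x : K}

lemma mul_pow_ne_mul_pow (hq : q ≠ 0) (hb : b ≠ 0) (hab : ∀ k : ℤ, a / b ≠ q ^ k) (i j : ℕ) :
    a * q ^ i ≠ b * q ^ j := fun h => hab (j - i) <| by
  rw [zpow_sub₀ hq, zpow_natCast, zpow_natCast, div_eq_div_iff hb (pow_ne_zero i hq), h, mul_comm]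

lemma div_mul_pow_ne_one (hb : b ≠ 0) (hab : ∀ i j : ℕ, a * q ^ i ≠ b * q ^ j) (n : ℕ) :
    a / b * q ^ n ≠ 1 := fun h => hab n 0 (by field_simp at h; simpa using h)

lemma injective_sumElim_pow_inv (hq : q ≠ 0)
    (hq_inj : Function.Injective fun k : ℕ => q ^ k) (ha0 : a ≠ 0) (hb0 : b ≠ 0)
    (ha : ∀ n : ℕ, a * q ^ n ≠ 1) (hb : ∀ n : ℕ, b * q ^ n ≠ 1)
    (hab : ∀ i j : ℕ, a * q ^ i ≠ b * q ^ j) :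
    Function.Injective (Sum.elim (fun k : ℕ => q ^ k)
      (Sum.elim (fun k : ℕ => (a * q ^ k)⁻¹) fun k : ℕ => (b * q ^ k)⁻¹)) := by
  have inv_inj {y : K} (hy : y ≠ 0) : Function.Injective fun k : ℕ => (y * q ^ k)⁻¹ :=
    inv_injective.comp ((mul_right_injective₀ hy).comp hq_inj)
  have pow_ne_inv {y : K} (hy0 : y ≠ 0) (hy : ∀ n : ℕ, y * q ^ n ≠ 1) (i j : ℕ) :
      q ^ i ≠ (y * q ^ j)⁻¹ := fun h => hy (i + j) <| by
    rw [pow_add, mul_left_comm, h, inv_mul_cancel₀ (mul_ne_zero hy0 (pow_ne_zero j hq))]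
  refine hq_inj.sumElim ((inv_inj ha0).sumElim (inv_inj hb0) fun i j h =>
    hab i j (inv_injective h)) ?_
  rintro i (j | j)
  exacts [pow_ne_inv ha0 ha i j, pow_ne_inv hb0 hb i j]

lemma prod_sub_div_pow (hq : q ≠ 0) (hx : x ≠ 0) (z : K) (s : Finset ℕ) :
    ∏ j ∈ s, (z - x / q ^ j) = (∏ j ∈ s, -(x / q ^ j)) * ∏ j ∈ s, (1 - z / x * q ^ j) := by
  rw [← prod_mul_distrib]
  exact prod_congr rfl fun j _ => by field_simp; ring

lemma prod_neg_div_pow_ne_zero (hq : q ≠ 0) (hx : x ≠ 0) (s : Finset ℕ) :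
    ∏ j ∈ s, -(x / q ^ j) ≠ 0 :=
  prod_ne_zero_iff.mpr fun j _ => neg_ne_zero.mpr (div_ne_zero hx (pow_ne_zero j hq))

end Powers

section NormedPowers

variable {K : Type*} [NormedDivisionRing K] {q : K}

lemma mul_pow_self_ne_one (hq : ‖q‖ < 1) (n : ℕ) : q * q ^ n ≠ 1 := fun h => by
  have hlt := pow_lt_one₀ (norm_nonneg q) hq n.succ_ne_zero
  rw [← norm_pow, pow_succ', h, norm_one] at hlt
  exact hlt.false

lemma pow_injective_of_norm_lt_one (hq0 : q ≠ 0) (hq : ‖q‖ < 1) :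
    Function.Injective fun k : ℕ => q ^ k := fun i j h =>
  pow_right_injective₀ (norm_pos_iff.mpr hq0) hq.ne (by simpa using congrArg norm h)

lemma summable_norm_neg_mul_pow (hq : ‖q‖ < 1) (x : K) :
    Summable fun j : ℕ => ‖-(x * q ^ j)‖ := by
  simp only [norm_neg, norm_mul, norm_pow]
  exact (summable_geometric_of_lt_one (norm_nonneg _) hq).mul_left _

end NormedPowers

/-! ### Finite q-shifted factorials -/

section QFactorial

variable {q : ℂ}

lemma qp_ne_zero {x : ℂ} (hx : ∀ n : ℕ, x * q ^ n ≠ 1) (n : ℕ) : qp q x n ≠ 0 :=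
  prod_ne_zero_iff.mpr fun i _ => sub_ne_zero.mpr (hx i).symm

lemma qp_add (q y : ℂ) (k n : ℕ) : qp q y (k + n) = qp q y k * qp q (y * q ^ k) n := by
  simp only [qp, prod_range_add, pow_add, mul_assoc]

lemma qp_mul_pow {y : ℂ} {k : ℕ} (hy : qp q y k ≠ 0) (n : ℕ) :
    qp q (y * q ^ k) n = qp q y (n + k) / qp q y k := by
  rw [add_comm, qp_add, mul_div_cancel_left₀ _ hy]

lemma qp_inv_base (hq : q ≠ 0) {y : ℂ} (hy : y ≠ 0) (k : ℕ) :
    qp q⁻¹ (y / q) k = (-y) ^ k / q ^ (k + 1).choose 2 * qp q (q / y) k := by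
  induction k with
  | zero => simp [qp]
  | succ k ih =>
    have hchoose : (k + 1 + 1).choose 2 = (k + 1) + (k + 1).choose 2 := by
      rw [Nat.choose_succ_succ', Nat.choose_one_right]
    have hfactor : 1 - y / q * q⁻¹ ^ k = -y / q ^ (k + 1) * (1 - q / y * q ^ k) := by
      rw [inv_pow]
      field_simp
      ring
    rw [qp, prod_range_succ, ← qp, ih, hfactor, qp, qp, prod_range_succ, hchoose]
    ring

lemma qp_div_pow (hq : q ≠ 0) {y : ℂ} (hy : y ≠ 0) {n k : ℕ} (hk : k ≤ n) :
    qp q (y / q ^ k) n =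
      (-y) ^ k / q ^ (k + 1).choose 2 * qp q (q / y) k * qp q y (n - k) := by
  obtain ⟨m, rfl⟩ := Nat.exists_eq_add_of_le hk
  rw [← qp_inv_base hq hy, qp_add, Nat.add_sub_cancel_left, div_mul_cancel₀ _ (pow_ne_zero k hq)]
  congr 1
  rw [qp, qp, ← prod_range_reflect]
  refine prod_congr rfl fun j hj => ?_
  have hpow : q ^ k = q ^ (k - 1 - j) * q * q ^ j := by
    rw [← pow_succ, ← pow_add]
    have := mem_range.mp hj
    congr 1
    omega
  rw [hpow, inv_pow]
  field_simp

lemma prod_erase_one_sub_div_pow (hq : q ≠ 0) {n k : ℕ} (hk : k < n) :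
    ∏ j ∈ (range n).erase k, (1 - q ^ j / q ^ k) =
      (-1) ^ k / q ^ (k + 1).choose 2 * qp q q k * qp q q (n - 1 - k) := by
  have hhead : ∏ j ∈ range k, (1 - q ^ j / q ^ k) = qp q (1 / q ^ k) k :=
    prod_congr rfl fun j _ => by ring
  have htail : ∏ j ∈ range (n - 1 - k), (1 - q ^ (k + 1 + j) / q ^ k) = qp q q (n - 1 - k) :=
    prod_congr rfl fun j _ => by field_simp; ring
  rw [prod_range_erase _ hk, hhead, htail, qp_div_pow hq one_ne_zero le_rfl]
  simp [qp]

lemma qp_div_pow_div_qp_div_pow (hq : q ≠ 0) {y w : ℂ} (hy : y ≠ 0) (hw : w ≠ 0) {n k : ℕ}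
    (hk : k ≤ n) :
    qp q (y / q ^ k) n / qp q (w / q ^ k) n =
      (y / w) ^ k * (qp q (q / y) k * qp q y (n - k) / (qp q (q / w) k * qp q w (n - k))) := by
  rw [qp_div_pow hq hy hk, qp_div_pow hq hw hk, neg_pow y, neg_pow w, div_pow]
  have hpow : q ^ (k + 1).choose 2 ≠ 0 := pow_ne_zero _ hq
  field_simp

lemma qp_div_pow_mul_qp_mul_pow (hq : q ≠ 0) {y : ℂ} (hy : y ≠ 0) {n k : ℕ} (hk : k < n) :
    qp q (y / q ^ k) n * qp q (q / y * q ^ k) n / ∏ j ∈ (range n).erase k, (1 - q ^ j / q ^ k) =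
      y ^ k * (qp q (q / y) (n + k) * qp q y (n - k) / (qp q q k * qp q q (n - 1 - k))) := by
  rw [qp_div_pow hq hy hk.le, prod_erase_one_sub_div_pow hq hk, add_comm n k, qp_add, neg_pow y]
  have hpow : q ^ (k + 1).choose 2 ≠ 0 := pow_ne_zero _ hq
  field_simp

lemma prod_sub_div_prod_one_sub (hq : q ≠ 0) {x : ℂ} (hx : x ≠ 0) (z : ℂ) (n : ℕ) :
    (∏ j ∈ range n, (z - x / q ^ j)) / ∏ j ∈ range n, (1 - x / q ^ j) =
      qp q (z / x) n / qp q (1 / x) n := by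
  rw [prod_sub_div_pow hq hx, prod_sub_div_pow hq hx,
    mul_div_mul_left _ _ (prod_neg_div_pow_ne_zero hq hx _), qp, qp]

lemma prod_sub_div_prod_erase_one_sub (hq : q ≠ 0) (z : ℂ) {n k : ℕ} (hk : k < n) :
    (∏ j ∈ range n, (z - q ^ k / q ^ j)) / ∏ j ∈ (range n).erase k, (1 - q ^ k / q ^ j) =
      -(qp q (z / q ^ k) n / ∏ j ∈ (range n).erase k, (1 - q ^ j / q ^ k)) := by
  have hqk : q ^ k ≠ 0 := pow_ne_zero k hq
  rw [prod_sub_div_pow hq hqk, prod_sub_div_pow hq hqk,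
    ← mul_prod_erase (range n) _ (mem_range.mpr hk), div_self hqk, neg_one_mul, neg_mul, neg_div,
    mul_div_mul_left _ _ (prod_neg_div_pow_ne_zero hq hqk _), qp]
  simp only [one_div_mul_eq_div]

end QFactorial

/-! ### The truncated transformation -/

/-- The `k`-th term of the series `phi21`. -/
def phi21Term (q a b c z : ℂ) (k : ℕ) : ℂ :=
  qp q a k * qp q b k / (qp q c k * qp q q k) * z ^ k

/-- The residue at `q ^ k` of the truncated function
`(cx, qx/z;q)_n ∏_{j<n} (z - x/q^j) / ((ax, bx;q)_n ∏_{j<n} (1 - x/q^j) x)`, written as a term of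
the series on the left-hand side of the transformation times a factor that converges. -/
def powResidue (q a b c z : ℂ) (n k : ℕ) : ℂ :=
  phi21Term q a b c z k *
    (qp q (q / z) (n + k) * qp q c (n + k) / (qp q a (n + k) * qp q b (n + k)) *
      qp q z (n - k) * (qp q q (n - 1 - k))⁻¹)

/-- Minus the residue at `(a * q ^ k)⁻¹` of the function in `powResidue`, written likewise in terms
of the first series on the right-hand side; the second series is obtained by exchanging `a` and
`b`. -/
def invResidue (q a b c z : ℂ) (n k : ℕ) : ℂ :=
  phi21Term q a (q * a / c) (q * a / b) (q * c / (a * b * z)) k *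
    (qp q (a * z) (n + k) / qp q a (n + k) *
      (qp q (c / a) (n - k) * qp q (q / (a * z)) (n - k) / qp q (b / a) (n - k)) *
      (qp q q (n - 1 - k))⁻¹)

section Truncated

variable {q a b c z : ℂ}

lemma neg_powResidue_eq (hq : q ≠ 0) (hz : z ≠ 0) (ha : ∀ k, qp q a k ≠ 0)
    (hb : ∀ k, qp q b k ≠ 0) (hc : ∀ k, qp q c k ≠ 0) {n k : ℕ} (hk : k < n) :
    -powResidue q a b c z n k =
      (∏ j ∈ range n, (z - q ^ k / q ^ j)) * (qp q (c * q ^ k) n * qp q (q / z * q ^ k) n) /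
        ((∏ j ∈ (range n).erase k, (1 - q ^ k / q ^ j)) *
          (qp q (a * q ^ k) n * qp q (b * q ^ k) n)) := by
  symm
  rw [mul_div_mul_comm, prod_sub_div_prod_erase_one_sub hq z hk]
  calc _ = -(qp q (z / q ^ k) n * qp q (q / z * q ^ k) n /
          (∏ j ∈ (range n).erase k, (1 - q ^ j / q ^ k)) *
          (qp q (c * q ^ k) n / (qp q (a * q ^ k) n * qp q (b * q ^ k) n))) := by ring
    _ = _ := by
      rw [qp_div_pow_mul_qp_mul_pow hq hz hk, qp_mul_pow (ha k), qp_mul_pow (hb k),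
        qp_mul_pow (hc k), powResidue, phi21Term]
      simp only [div_eq_mul_inv, mul_inv, inv_inv]
      ring

lemma invResidue_eq (hq : q ≠ 0) (ha0 : a ≠ 0) (hb0 : b ≠ 0) (hc0 : c ≠ 0) (hz : z ≠ 0)
    (ha : ∀ k, qp q a k ≠ 0) {n k : ℕ} (hk : k < n) :
    invResidue q a b c z n k =
      (∏ j ∈ range n, (z - (a * q ^ k)⁻¹ / q ^ j)) *
          (qp q (c / (a * q ^ k)) n * qp q (q / z / (a * q ^ k)) n) /
        ((∏ j ∈ range n, (1 - (a * q ^ k)⁻¹ / q ^ j)) *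
          ((∏ j ∈ (range n).erase k, (1 - a * q ^ j / (a * q ^ k))) *
            qp q (b / (a * q ^ k)) n)) := by
  have hpole : ∏ j ∈ (range n).erase k, (1 - a * q ^ j / (a * q ^ k)) =
      ∏ j ∈ (range n).erase k, (1 - q ^ j / q ^ k) :=
    prod_congr rfl fun j _ => by rw [mul_div_mul_left _ _ ha0]
  have hpair : qp q (q / (a * z) / q ^ k) n * qp q (a * z * q ^ k) n /
      ∏ j ∈ (range n).erase k, (1 - q ^ j / q ^ k) = (q / (a * z)) ^ k *
        (qp q (a * z) (n + k) * qp q (q / (a * z)) (n - k) /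
          (qp q q k * qp q q (n - 1 - k))) := by
    simpa only [div_div_cancel₀ hq] using
      qp_div_pow_mul_qp_mul_pow hq (div_ne_zero hq (mul_ne_zero ha0 hz)) hk
  have hquot := qp_div_pow_div_qp_div_pow hq (div_ne_zero hc0 ha0) (div_ne_zero hb0 ha0) hk.le
  rw [div_div_div_cancel_right₀ ha0, div_div_eq_mul_div, div_div_eq_mul_div] at hquot
  have harg : q * c / (a * b * z) = q / (a * z) * (c / b) := by ring
  have hzx : z / (a * q ^ k)⁻¹ = a * z * q ^ k := by rw [div_inv_eq_mul]; ring
  have hqx : q / z / (a * q ^ k) = q / (a * z) / q ^ k := by ring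
  symm
  rw [mul_div_mul_comm, prod_sub_div_prod_one_sub hq (by simp [ha0, hq]), hpole, hzx, hqx,
    div_inv_eq_mul, one_mul, ← div_div c, ← div_div b]
  calc _ = qp q (q / (a * z) / q ^ k) n * qp q (a * z * q ^ k) n /
          (∏ j ∈ (range n).erase k, (1 - q ^ j / q ^ k)) *
          (qp q (c / a / q ^ k) n / qp q (b / a / q ^ k) n) / qp q (a * q ^ k) n := by
        simp only [div_eq_mul_inv, mul_inv]
        ring
    _ = _ := by
      rw [hpair, hquot, qp_mul_pow (ha k), invResidue, phi21Term, harg, mul_pow]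
      simp only [div_eq_mul_inv, mul_inv, inv_inv]
      ring

lemma prod_one_sub_mul_pow_mul (q x y : ℂ) (n : ℕ) :
    ∏ j ∈ range n, (1 - y * q ^ j * x) = qp q (y * x) n := by
  simp only [qp, mul_right_comm]

lemma prod_one_sub_mul_pow_div (q x y : ℂ) (n : ℕ) :
    ∏ j ∈ range n, (1 - y * q ^ j / x) = qp q (y / x) n := by
  simp only [div_eq_mul_inv, prod_one_sub_mul_pow_mul]

lemma sum_powResidue_eq (hq : q ≠ 0) (hq_inj : Function.Injective fun k : ℕ => q ^ k)
    (ha0 : a ≠ 0) (hb0 : b ≠ 0) (hc0 : c ≠ 0) (hz : z ≠ 0)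
    (ha : ∀ n : ℕ, a * q ^ n ≠ 1) (hb : ∀ n : ℕ, b * q ^ n ≠ 1) (hc : ∀ n : ℕ, c * q ^ n ≠ 1)
    (hab : ∀ i j : ℕ, a * q ^ i ≠ b * q ^ j) (n : ℕ) :
    ∑ k ∈ range n, powResidue q a b c z n k =
      (q * c / (a * b * z)) ^ n - z ^ n +
        (∑ k ∈ range n, invResidue q a b c z n k + ∑ k ∈ range n, invResidue q b a c z n k) := by
  -- `∏ j ∈ s, (γ j - β j * y)` is the numerator at `y` of the function in `powResidue`, and `x`
  -- enumerates its nonzero poles.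
  let x : ℕ ⊕ ℕ ⊕ ℕ → ℂ :=
    Sum.elim (fun j => q ^ j) (Sum.elim (fun j => (a * q ^ j)⁻¹) fun j => (b * q ^ j)⁻¹)
  let β : ℕ ⊕ ℕ ⊕ ℕ → ℂ :=
    Sum.elim (fun j => (q ^ j)⁻¹) (Sum.elim (fun j => c * q ^ j) fun j => q / z * q ^ j)
  let γ : ℕ ⊕ ℕ ⊕ ℕ → ℂ := Sum.elim (fun _ => z) (Sum.elim (fun _ => 1) fun _ => 1)
  let s : Finset (ℕ ⊕ ℕ ⊕ ℕ) := (range n).disjSum ((range n).disjSum (range n))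
  have hx : Function.Injective x := injective_sumElim_pow_inv hq hq_inj ha0 hb0 ha hb hab
  have hx0 : ∀ i, x i ≠ 0 := by rintro (j | j | j) <;> simp [x, ha0, hb0, hq]
  have residues := sum_prod_div_prod_erase (s := s) hx.injOn (fun i _ => hx0 i) β γ
  have hγ : ∏ j ∈ s, γ j = z ^ n := by simp [s, γ, prod_disjSum]
  have hβ : ∏ j ∈ s, β j * x j = (q * c / (a * b * z)) ^ n := by
    simp only [s, β, x, prod_disjSum, Sum.elim_inl, Sum.elim_inr, ← prod_mul_distrib]
    refine prod_eq_pow_card (fun j _ => ?_) |>.trans (by rw [card_range])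
    field_simp
  rw [hγ, hβ] at residues
  simp only [s, x, β, γ, sum_disjSum, prod_disjSum, prod_erase_inl_disjSum, prod_erase_inr_disjSum,
    Sum.elim_inl, Sum.elim_inr, div_inv_eq_mul, inv_mul_eq_div, ← div_eq_mul_inv,
    mul_comm (q ^ _) (_ * q ^ _), prod_one_sub_mul_pow_mul, prod_one_sub_mul_pow_div,
    mul_comm (qp q (a / _) n)] at residues
  rw [sum_congr rfl fun k hk => (neg_powResidue_eq hq hz (qp_ne_zero ha) (qp_ne_zero hb)
      (qp_ne_zero hc) (mem_range.mp hk)).symm,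
    sum_congr rfl fun k hk =>
      (invResidue_eq hq ha0 hb0 hc0 hz (qp_ne_zero ha) (mem_range.mp hk)).symm,
    sum_congr rfl fun k hk =>
      (invResidue_eq hq hb0 ha0 hc0 hz (qp_ne_zero hb) (mem_range.mp hk)).symm,
    sum_neg_distrib] at residues
  linear_combination -residues

end Truncated

/-! ### Passage to the limit -/

section Tannery

variable {R : Type*} [NormedRing R] [CompleteSpace R]

lemma tendsto_sum_range_mul {t : ℕ → R} (ht : Summable fun k => ‖t k‖) {u : ℕ → ℕ → R} {C : ℝ}
    {l : R} (hu : ∀ n k, ‖u n k‖ ≤ C) (hl : ∀ k, Tendsto (u · k) atTop (𝓝 l)) :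
    Tendsto (fun n => ∑ k ∈ range n, t k * u n k) atTop (𝓝 ((∑' k, t k) * l)) := by
  simp only [fun n => sum_eq_tsum_indicator (fun k => t k * u n k) (range n)]
  rw [← ht.of_norm.tsum_mul_right]
  refine tendsto_tsum_of_dominated_convergence (ht.mul_right C) (fun k => ?_)
    (Eventually.of_forall fun n k => ?_)
  · refine ((hl k).const_mul (t k)).congr' ?_
    filter_upwards [eventually_gt_atTop k] with n hn
    rw [Set.indicator_of_mem (by simpa using hn)]
  · refine (norm_indicator_le_norm_self _ _).trans ((norm_mul_le _ _).trans ?_)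
    gcongr
    exact hu n k

lemma tendsto_sum_range_mul_shift {t : ℕ → R} (ht : Summable fun k => ‖t k‖) {f g h : ℕ → R}
    {α β δ : R} (hf : Tendsto f atTop (𝓝 α)) (hg : Tendsto g atTop (𝓝 β))
    (hh : Tendsto h atTop (𝓝 δ)) :
    Tendsto (fun n => ∑ k ∈ range n, t k * (f (n + k) * g (n - k) * h (n - 1 - k))) atTop
      (𝓝 ((∑' k, t k) * (α * β * δ))) := by
  obtain ⟨Cf, hCf0, hCf⟩ := (Metric.isBounded_range_of_tendsto f hf).exists_pos_norm_le
  obtain ⟨Cg, hCg0, hCg⟩ := (Metric.isBounded_range_of_tendsto g hg).exists_pos_norm_le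
  obtain ⟨Ch, -, hCh⟩ := (Metric.isBounded_range_of_tendsto h hh).exists_pos_norm_le
  simp only [Set.forall_mem_range] at hCf hCg hCh
  refine tendsto_sum_range_mul ht (C := Cf * Cg * Ch) (fun n k => ?_) fun k => ?_
  · calc ‖f (n + k) * g (n - k) * h (n - 1 - k)‖
        ≤ ‖f (n + k)‖ * ‖g (n - k)‖ * ‖h (n - 1 - k)‖ := norm_mul₃_le
      _ ≤ Cf * Cg * Ch := by gcongr <;> apply_rules
  · exact ((hf.comp (tendsto_add_atTop_nat k)).mul (hg.comp (tendsto_sub_atTop_nat k))).mul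
      (hh.comp ((tendsto_sub_atTop_nat k).comp (tendsto_sub_atTop_nat 1)))

end Tannery

section Limits

variable {q : ℂ}

lemma tendsto_qp (hq : ‖q‖ < 1) (x : ℂ) : Tendsto (qp q x) atTop (𝓝 (qpi q x)) := by
  have h := multipliable_one_add_of_summable (summable_norm_neg_mul_pow hq x)
  simp only [← sub_eq_add_neg] at h
  exact h.tendsto_prod_tprod_nat

lemma qpi_ne_zero (hq : ‖q‖ < 1) {x : ℂ} (hx : ∀ n : ℕ, x * q ^ n ≠ 1) : qpi q x ≠ 0 := by
  simpa only [qpi, ← sub_eq_add_neg] using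
    tprod_one_add_ne_zero_of_summable (f := fun j : ℕ => -(x * q ^ j))
      (fun n => by simpa only [← sub_eq_add_neg] using sub_ne_zero.mpr (hx n).symm)
      (summable_norm_neg_mul_pow hq x)

lemma summable_norm_phi21Term (hq : ‖q‖ < 1) (a b : ℂ) {c z : ℂ} (hz : ‖z‖ < 1)
    (hc : ∀ n : ℕ, c * q ^ n ≠ 1) : Summable fun k => ‖phi21Term q a b c z k‖ := by
  have hlim := ((tendsto_qp hq a).mul (tendsto_qp hq b)).div
    ((tendsto_qp hq c).mul (tendsto_qp hq q))
    (mul_ne_zero (qpi_ne_zero hq hc) (qpi_ne_zero hq (mul_pow_self_ne_one hq)))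
  obtain ⟨C, hC⟩ := (Metric.isBounded_range_of_tendsto _ hlim).exists_norm_le
  rw [Set.forall_mem_range] at hC
  refine Summable.of_nonneg_of_le (fun _ => norm_nonneg _) (fun k => ?_)
    ((summable_geometric_of_lt_one (norm_nonneg z) hz).mul_left C)
  rw [phi21Term, norm_mul, norm_pow]
  gcongr
  exact hC k

variable {a b c z : ℂ}

lemma tendsto_sum_powResidue (hq : ‖q‖ < 1) (hz : ‖z‖ < 1) (ha : ∀ n : ℕ, a * q ^ n ≠ 1)
    (hb : ∀ n : ℕ, b * q ^ n ≠ 1) (hc : ∀ n : ℕ, c * q ^ n ≠ 1) :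
    Tendsto (fun n => ∑ k ∈ range n, powResidue q a b c z n k) atTop
      (𝓝 (phi21 q a b c z *
        (qpi q (q / z) * qpi q c / (qpi q a * qpi q b) * qpi q z * (qpi q q)⁻¹))) := by
  simpa only [powResidue, phi21, phi21Term, Pi.div_apply] using tendsto_sum_range_mul_shift
    (summable_norm_phi21Term hq a b hz hc)
    (((tendsto_qp hq _).mul (tendsto_qp hq c)).div ((tendsto_qp hq a).mul (tendsto_qp hq b))
      (mul_ne_zero (qpi_ne_zero hq ha) (qpi_ne_zero hq hb)))
    (tendsto_qp hq z) ((tendsto_qp hq q).inv₀ (qpi_ne_zero hq (mul_pow_self_ne_one hq)))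

lemma tendsto_sum_invResidue (hq : ‖q‖ < 1) (ha0 : a ≠ 0) (hb0 : b ≠ 0)
    (hw : ‖q * c / (a * b * z)‖ < 1) (ha : ∀ n : ℕ, a * q ^ n ≠ 1)
    (hab : ∀ i j : ℕ, a * q ^ i ≠ b * q ^ j) :
    Tendsto (fun n => ∑ k ∈ range n, invResidue q a b c z n k) atTop
      (𝓝 (phi21 q a (q * a / c) (q * a / b) (q * c / (a * b * z)) *
        (qpi q (a * z) / qpi q a * (qpi q (c / a) * qpi q (q / (a * z)) / qpi q (b / a)) *
          (qpi q q)⁻¹))) := by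
  have hqab (n : ℕ) : q * a / b * q ^ n ≠ 1 := by
    convert div_mul_pow_ne_one hb0 hab (n + 1) using 1
    ring
  simpa only [invResidue, phi21, phi21Term, Pi.div_apply] using tendsto_sum_range_mul_shift
    (summable_norm_phi21Term hq a _ hw hqab)
    ((tendsto_qp hq _).div (tendsto_qp hq a) (qpi_ne_zero hq ha))
    (((tendsto_qp hq _).mul (tendsto_qp hq _)).div (tendsto_qp hq _)
      (qpi_ne_zero hq (div_mul_pow_ne_one ha0 fun i j => (hab j i).symm)))
    ((tendsto_qp hq q).inv₀ (qpi_ne_zero hq (mul_pow_self_ne_one hq)))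

end Limits

theorem stmt8_general {q a b c z : ℂ} (hq0 : q ≠ 0) (hq1 : ‖q‖ < 1)
    (ha0 : a ≠ 0) (hb0 : b ≠ 0) (hc0 : c ≠ 0) (hz1 : ‖q * c / (a * b)‖ < ‖z‖) (hz2 : ‖z‖ < 1)
    (hab : ∀ k : ℤ, a / b ≠ q ^ k) (ha : ∀ n : ℕ, a * q ^ n ≠ 1) (hb : ∀ n : ℕ, b * q ^ n ≠ 1)
    (hc : ∀ n : ℕ, c * q ^ n ≠ 1) :
    qpi q z * qpi q (q / z) * phi21 q a b c z =
      qpi q (a * z) * qpi q (q / (a * z)) *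
          (qpi q (c / a) * qpi q b / (qpi q c * qpi q (b / a))) *
          phi21 q a (q * a / c) (q * a / b) (q * c / (a * b * z)) +
        qpi q (b * z) * qpi q (q / (b * z)) *
          (qpi q (c / b) * qpi q a / (qpi q c * qpi q (a / b))) *
          phi21 q b (q * b / c) (q * b / a) (q * c / (a * b * z)) := by
  have hz : z ≠ 0 := norm_pos_iff.mp ((norm_nonneg _).trans_lt hz1)
  have hw : ‖q * c / (a * b * z)‖ < 1 := by
    rwa [← div_div, norm_div, div_lt_one (norm_pos_iff.mpr hz)]
  have hab' := mul_pow_ne_mul_pow hq0 hb0 hab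
  have hba' (i j : ℕ) := (hab' j i).symm
  have hlim_b := tendsto_sum_invResidue (c := c) (z := z) hq1 hb0 ha0 (by rwa [mul_comm b]) hb hba'
  rw [mul_comm b a] at hlim_b
  have hlim := tendsto_nhds_unique (tendsto_sum_powResidue hq1 hz2 ha hb hc) <|
    (((tendsto_pow_atTop_nhds_zero_of_norm_lt_one hw).sub
      (tendsto_pow_atTop_nhds_zero_of_norm_lt_one hz2)).add
      ((tendsto_sum_invResidue hq1 ha0 hb0 hw ha hab').add hlim_b)).congr fun n =>
    (sum_powResidue_eq hq0 (pow_injective_of_norm_lt_one hq0 hq1) ha0 hb0 hc0 hz ha hb hc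
      hab' n).symm
  have hqpi_a := qpi_ne_zero hq1 ha
  have hqpi_b := qpi_ne_zero hq1 hb
  have hqpi_c := qpi_ne_zero hq1 hc
  have hqpi_q := qpi_ne_zero hq1 (mul_pow_self_ne_one hq1)
  have hqpi_ab := qpi_ne_zero hq1 (div_mul_pow_ne_one hb0 hab')
  have hqpi_ba := qpi_ne_zero hq1 (div_mul_pow_ne_one ha0 hba')
  field_simp at hlim ⊢
  linear_combination hlim

/-- Mimachi's three-term transformation for `₂φ₁`:
`(z,q/z;q)_∞ ₂φ₁(a,b;c;q,z)
  = (az,q/(az);q)_∞ ((c/a,b;q)_∞/(c,b/a;q)_∞) ₂φ₁(a,qa/c;qa/b;q,qc/(abz))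
  + (bz,q/(bz);q)_∞ ((c/b,a;q)_∞/(c,a/b;q)_∞) ₂φ₁(b,qb/c;qb/a;q,qc/(abz))`. -/
theorem stmt8 (q : ℝ) (hq0 : 0 < q) (hq1 : q < 1) (a b c z : ℂ)
    (ha : a ≠ 0) (hb : b ≠ 0) (hc0 : c ≠ 0)
    (hz1 : ‖(q : ℂ) * c / (a * b)‖ < ‖z‖) (hz2 : ‖z‖ < 1)
    (hab : ∀ k : ℤ, a / b ≠ (q : ℂ) ^ k)
    (hdisj : ∀ m n : ℕ,
      (q : ℂ) ^ m ≠ a⁻¹ * ((q : ℂ) ^ n)⁻¹ ∧ (q : ℂ) ^ m ≠ b⁻¹ * ((q : ℂ) ^ n)⁻¹)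
    (hc : ∀ n : ℕ, c * (q : ℂ) ^ n ≠ 1)
    (hqab : ∀ n : ℕ, (q : ℂ) * a / b * (q : ℂ) ^ n ≠ 1)
    (hqba : ∀ n : ℕ, (q : ℂ) * b / a * (q : ℂ) ^ n ≠ 1) :
    qpi (q : ℂ) z * qpi (q : ℂ) ((q : ℂ) / z) * phi21 (q : ℂ) a b c z =
      qpi (q : ℂ) (a * z) * qpi (q : ℂ) ((q : ℂ) / (a * z)) *
          (qpi (q : ℂ) (c / a) * qpi (q : ℂ) b / (qpi (q : ℂ) c * qpi (q : ℂ) (b / a))) *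
          phi21 (q : ℂ) a ((q : ℂ) * a / c) ((q : ℂ) * a / b) ((q : ℂ) * c / (a * b * z)) +
        qpi (q : ℂ) (b * z) * qpi (q : ℂ) ((q : ℂ) / (b * z)) *
          (qpi (q : ℂ) (c / b) * qpi (q : ℂ) a / (qpi (q : ℂ) c * qpi (q : ℂ) (a / b))) *
          phi21 (q : ℂ) b ((q : ℂ) * b / c) ((q : ℂ) * b / a) ((q : ℂ) * c / (a * b * z)) :=
  stmt8_general (mod_cast hq0.ne') (by simpa [abs_of_pos hq0]) ha hb hc0 hz1 hz2 hab
    (fun n h => (hdisj 0 n).1 (by rw [pow_zero, ← mul_inv, h, inv_one]))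
    (fun n h => (hdisj 0 n).2 (by rw [pow_zero, ← mul_inv, h, inv_one])) hc
end
end
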